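/- arXiv:1605.00346 — 2 statements merged into one kernel-verified Lean document; each statement's English description precedes it below -/
import Mathlib

section
/- Let x_1, …, x_{N_1+N_2} ∈ ℝ^D be arbitrary, viewed as two segments {x_n : n = 1, …, N_1} and {x_n : n = N_1+1, …, N_1+N_2}, and let 0 < t < N_1. Consider shifting the change point from N_1 to N_1 − t, so that the two segments become {x_n : n = 1, …, N_1 − t} and {x_n : n = N_1 − t + 1, …, N_1 + N_2}. Then the total within-segment quadratic loss is strictly reduced by this operation if and only if N_1 |x̄_{0,N_1} − x̄_{N_1−t,N_1}|² / (N_1 − t) > N_2 |x̄_{N_1,N_1+N_2} − x̄_{N_1−t,N_1}|² / (N_2 + t), where x̄_{n_1,n_2} denotes the sample mean of x_{n_1+1}, …, x_{n_2}. -/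
open MeasureTheory ProbabilityTheory Filter Finset

noncomputable section

/-- Sample mean of the block `x_{a+1}, …, x_b`. -/
def sampleMean {D : ℕ} (x : ℕ → EuclideanSpace ℝ (Fin D)) (a b : ℕ) :
    EuclideanSpace ℝ (Fin D) :=
  ((b - a : ℕ) : ℝ)⁻¹ • ∑ n ∈ Finset.Ioc a b, x n

/-- Within-segment quadratic loss of the block `x_{a+1}, …, x_b`. -/
def lossQ {D : ℕ} (x : ℕ → EuclideanSpace ℝ (Fin D)) (a b : ℕ) : ℝ :=
  ∑ n ∈ Finset.Ioc a b, ‖x n - sampleMean x a b‖ ^ 2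

theorem lossQ_eq {D : ℕ} (x : ℕ → EuclideanSpace ℝ (Fin D)) (a k : ℕ) (hk : 0 < k) :
    lossQ x a (a + k) = ∑ n ∈ Finset.Ioc a (a + k), ‖x n‖ ^ 2
      - ‖∑ n ∈ Finset.Ioc a (a + k), x n‖ ^ 2 / k := by
  have hk' : (k : ℝ) ≠ 0 := by positivity
  unfold lossQ
  simp only [norm_sub_sq_real]
  rw [Finset.sum_add_distrib, Finset.sum_sub_distrib, ← Finset.mul_sum, ← sum_inner]
  simp only [sampleMean, Finset.sum_const, Nat.card_Ioc, Nat.add_sub_cancel_left,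
    inner_smul_right, real_inner_self_eq_norm_sq, norm_smul, nsmul_eq_mul, norm_inv,
    Real.norm_natCast]
  field_simp
  ring

theorem merge_one {D : ℕ} (A B : EuclideanSpace ℝ (Fin D)) (m t : ℝ) (hm : 0 < m) (ht : 0 < t) :
    ‖A‖ ^ 2 / m + ‖B‖ ^ 2 / t - ‖A + B‖ ^ 2 / (m + t) =
      t * ((m + t) * ‖(m + t)⁻¹ • (A + B) - t⁻¹ • B‖ ^ 2 / m) := by
  have h : m + t ≠ 0 := by positivity
  simp only [norm_sub_sq_real, inner_smul_left, inner_smul_right, norm_smul, norm_add_sq_real,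
    inner_add_left, real_inner_self_eq_norm_sq, mul_pow, Real.norm_eq_abs, sq_abs]
  simp
  field_simp
  ring

theorem merge_two {D : ℕ} (B C : EuclideanSpace ℝ (Fin D)) (t N : ℝ) (hN : 0 < N) (ht : 0 < t) :
    ‖B‖ ^ 2 / t + ‖C‖ ^ 2 / N - ‖B + C‖ ^ 2 / (t + N) =
      t * (N * ‖N⁻¹ • C - t⁻¹ • B‖ ^ 2 / (N + t)) := by
  have h : t + N ≠ 0 := by positivity
  have h' : N + t ≠ 0 := by positivity
  simp only [norm_sub_sq_real, inner_smul_left, inner_smul_right, norm_smul, norm_add_sq_real,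
    real_inner_self_eq_norm_sq, mul_pow, Real.norm_eq_abs, sq_abs, real_inner_comm B C]
  simp
  field_simp
  ring

/-- **Proposition (change-point shift).**
Let `x_1, …, x_{N₁+N₂} ∈ ℝ^D` form two segments `(0, N₁]` and `(N₁, N₁+N₂]`, and let
`0 < t < N₁`.  Shifting the change point from `N₁` to `N₁ − t` strictly reduces the total
within-segment quadratic loss if and only if
`N₁ |x̄_{0,N₁} − x̄_{N₁−t,N₁}|² / (N₁ − t) > N₂ |x̄_{N₁,N₁+N₂} − x̄_{N₁−t,N₁}|² / (N₂ + t)`. -/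
theorem shift_reduces_loss_iff {D : ℕ} (x : ℕ → EuclideanSpace ℝ (Fin D))
    (N₁ N₂ t : ℕ) (ht : 0 < t) (htN : t < N₁) (hN₂ : 0 < N₂) :
    lossQ x 0 (N₁ - t) + lossQ x (N₁ - t) (N₁ + N₂) <
        lossQ x 0 N₁ + lossQ x N₁ (N₁ + N₂) ↔
      (N₂ : ℝ) * ‖sampleMean x N₁ (N₁ + N₂) - sampleMean x (N₁ - t) N₁‖ ^ 2 /
          ((N₂ : ℝ) + t) <
        (N₁ : ℝ) * ‖sampleMean x 0 N₁ - sampleMean x (N₁ - t) N₁‖ ^ 2 /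
          ((N₁ : ℝ) - t) := by
  obtain ⟨m, rfl⟩ : ∃ m, N₁ = m + t := ⟨N₁ - t, by omega⟩
  have hm : 0 < m := by omega
  have hmR : (0 : ℝ) < m := by exact_mod_cast hm
  have htR : (0 : ℝ) < t := by exact_mod_cast ht
  have hNR : (0 : ℝ) < N₂ := by exact_mod_cast hN₂
  have e1 := lossQ_eq x 0 m hm
  have e2 := lossQ_eq x m (t + N₂) (by omega)
  have e3 := lossQ_eq x 0 (m + t) (by omega)
  have e4 := lossQ_eq x (m + t) N₂ hN₂
  simp only [zero_add, ← add_assoc] at e1 e2 e3 e4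
  rw [Nat.add_sub_cancel, e1, e2, e3, e4]
  have s1 := Finset.sum_Ioc_consecutive x (Nat.zero_le m) (Nat.le_add_right m t)
  have s2 := Finset.sum_Ioc_consecutive x (Nat.le_add_right m t) (Nat.le_add_right (m + t) N₂)
  have q1 := Finset.sum_Ioc_consecutive (fun n => ‖x n‖ ^ 2)
    (Nat.zero_le m) (Nat.le_add_right m t)
  have q2 := Finset.sum_Ioc_consecutive (fun n => ‖x n‖ ^ 2)
    (Nat.le_add_right m t) (Nat.le_add_right (m + t) N₂)
  have m1 := merge_one (∑ n ∈ Finset.Ioc 0 m, x n) (∑ n ∈ Finset.Ioc m (m + t), x n) m t hmR htR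
  have m2 := merge_two (∑ n ∈ Finset.Ioc m (m + t), x n)
    (∑ n ∈ Finset.Ioc (m + t) (m + t + N₂), x n) t N₂ hNR htR
  rw [s1] at m1
  rw [s2] at m2
  simp only [sampleMean, Nat.add_sub_cancel_left, Nat.sub_zero, Nat.cast_add,
    add_sub_cancel_right]
  refine Iff.trans ?_ (mul_lt_mul_iff_right₀ htR)
  rw [← m1, ← m2, ← q1, ← q2]
  constructor <;> intro h <;> linarith
end
end

section
/- For all integers n_1, n_2 with n_2 ≥ n_1 ≥ 34, it holds that (n_1 / (n_1 + n_2)) · log log n_2 ≤ (1/2) · log log n_1, where log denotes the natural logarithm. -/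
/-- **Lemma (iterated-logarithm inequality).**
For all integers `n₁, n₂` with `n₂ ≥ n₁ ≥ 34`,
`(n₁ / (n₁ + n₂)) · log log n₂ ≤ (1/2) · log log n₁`. -/
theorem loglog_ratio_ineq (n₁ n₂ : ℕ) (h₁ : 34 ≤ n₁) (h₂ : n₁ ≤ n₂) :
    ((n₁ : ℝ) / (n₁ + n₂)) * Real.log (Real.log n₂) ≤
      (1 / 2 : ℝ) * Real.log (Real.log n₁) := by
  have ha : (34 : ℝ) ≤ n₁ := by exact_mod_cast h₁
  have hab : (n₁ : ℝ) ≤ n₂ := by exact_mod_cast h₂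
  generalize (n₁ : ℝ) = a at *
  generalize (n₂ : ℝ) = b at *
  have ha0 : 0 < a := by linarith
  have hb0 : 0 < b := by linarith
  have hL : 3 ≤ Real.log a := by
    have h32 : Real.log ((2 : ℝ) ^ 5) ≤ Real.log a :=
      Real.log_le_log (by norm_num) (by linarith)
    rw [Real.log_pow] at h32
    have := Real.log_two_gt_d9
    push_cast at h32
    linarith
  have hLb : Real.log a ≤ Real.log b := Real.log_le_log ha0 hab
  have hLL : 1 ≤ Real.log (Real.log a) := by
    rw [Real.le_log_iff_exp_le (by linarith)]
    have := Real.exp_one_lt_d9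
    linarith
  have k1 : Real.log b - Real.log a ≤ b / a - 1 := by
    rw [← Real.log_div hb0.ne' ha0.ne']
    exact Real.log_le_sub_one_of_pos (by positivity)
  have k2 : Real.log (Real.log b) - Real.log (Real.log a)
      ≤ (Real.log b - Real.log a) / 2 := by
    rw [← Real.log_div (by linarith) (by linarith)]
    have hp : 0 < Real.log a := by linarith
    refine (Real.log_le_sub_one_of_pos (div_pos (by linarith) hp)).trans ?_
    rw [div_sub_one hp.ne']
    exact div_le_div_of_nonneg_left (by linarith) (by norm_num) (by linarith)
  have k3 : a * (b / a - 1) = b - a := by field_simp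
  have k4 : 2 * a * (Real.log (Real.log b) - Real.log (Real.log a)) ≤ b - a := by
    rw [← k3]
    nlinarith
  rw [div_mul_eq_mul_div, div_le_iff₀ (by linarith)]
  nlinarith
end
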